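/- arXiv:2204.00355 — 2 statements merged into one kernel-verified Lean document; each statement's English description precedes it below -/
import Mathlib

section
/- Let ρ ∈ (0,1], T > 0, τ > N/(2m), and suppose Σ_n (A(n)+1)^{2τ} |φ_n|² ≤ C_φ < ∞. Then the series f²(x) = Σ_{n∈ℤ^N} φ_n E_{ρ,1}(−A(n)T^ρ) / (T^ρ E_{ρ,ρ+1}(−A(n)T^ρ)) e^{inx} converges absolutely and uniformly on 𝕋^N with ‖f²‖²_{C(𝕋^N)} ≤ (C/T^ρ) Σ_n (A(n)+1)^{2τ}|φ_n|². -/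
/-!
By Cauchy–Schwarz against `∑ (A n + 1) ^ (-2τ) < ∞` (a lattice sum with exponent `2τm > N`), the
claim reduces to a bound on the multiplier, `0 ≤ E_{ρ,1}(-t) ≤ Γ(ρ+1) E_{ρ,ρ+1}(-t)` with
`E_{ρ,ρ+1}(-t) > 0`.

For that, `u(s) = E_{ρ,1}(-t s ^ ρ)` solves the fractional relaxation equation `D^ρ u = -t u`,
`u(0) = 1`. Its implicit Grünwald–Letnikov discretization with step `1 / n` has the generating
function `S = B(1-ρ) / (B(-ρ) + t n ^ (-ρ))`, where `B(a) = (1 - X) ^ (-a)`. All coefficients of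
`B(-ρ)` except the constant one are nonpositive, and such signs force the coefficients of `S` to be
nonnegative and decreasing. The discrete Volterra equation `S + t n ^ (-ρ) B(ρ) S = B(1)` then
bounds the `n`-th coefficient of `S`, and letting `n → ∞` gives the bound for `u(1) = E_{ρ,1}(-t)`.
-/

open Filter

/-- The two-parameter Mittag-Leffler function `E_{ρ,μ}(z) = Σ_{k=0}^∞ z^k / Γ(ρk+μ)`. -/
noncomputable def mittagLeffler (ρ μ z : ℝ) : ℝ :=
  ∑' k : ℕ, z ^ k / Real.Gamma (ρ * k + μ)

/-- The character `x ↦ e^{i n·x}` on the `N`-dimensional torus, `n ∈ ℤ^N`. -/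
noncomputable def charFun {N : ℕ} (n : Fin N → ℤ) (x : Fin N → ℝ) : ℂ :=
  Complex.exp (Complex.I * ∑ i, (n i : ℂ) * (x i : ℂ))

open PowerSeries Topology

section PowerSeriesSigns

variable {R : Type*} [CommRing R] [LinearOrder R] [IsStrictOrderedRing R]

lemma coeff_nonneg_of_mul_eq {P G Q : R⟦X⟧} (hPG : P * G = Q) (hG₀ : 0 < coeff 0 G)
    (hG : ∀ n, coeff (n + 1) G ≤ 0) (hQ : ∀ n, 0 ≤ coeff n Q) (n : ℕ) : 0 ≤ coeff n P := by
  induction n using Nat.strong_induction_on with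
  | _ n ih =>
    have hconv : ∑ k ∈ Finset.range n, coeff k P * coeff (n - k) G + coeff n P * coeff 0 G =
        coeff n Q := by
      rw [← hPG, coeff_mul, Finset.Nat.sum_antidiagonal_eq_sum_range_succ_mk,
        Finset.sum_range_succ, Nat.sub_self]
    have hlower : ∑ k ∈ Finset.range n, coeff k P * coeff (n - k) G ≤ 0 := by
      refine Finset.sum_nonpos fun k hk => ?_
      have hkn : k < n := Finset.mem_range.1 hk
      obtain ⟨j, hj⟩ := Nat.exists_eq_add_one_of_ne_zero (Nat.sub_ne_zero_of_lt hkn)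
      rw [hj]
      exact mul_nonpos_of_nonneg_of_nonpos (ih k hkn) (hG j)
    exact nonneg_of_mul_nonneg_left (by linarith [hQ n]) hG₀

end PowerSeriesSigns

section Multichoose

lemma factorial_mul_multichoose (a : ℝ) (n : ℕ) :
    (n.factorial : ℝ) * Ring.multichoose a n = (ascPochhammer ℝ n).eval a := by
  rw [← nsmul_eq_mul, Ring.factorial_nsmul_multichoose_eq_ascPochhammer,
    Polynomial.ascPochhammer_smeval_eq_eval]

lemma multichoose_succ (a : ℝ) (n : ℕ) :
    Ring.multichoose a (n + 1) = Ring.multichoose a n * ((a + n) / (n + 1)) := by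
  have hfact : (n.factorial : ℝ) ≠ 0 := by positivity
  have hsucc := factorial_mul_multichoose a (n + 1)
  rw [ascPochhammer_succ_eval, ← factorial_mul_multichoose, Nat.factorial_succ] at hsucc
  push_cast at hsucc
  field_simp
  exact mul_left_cancel₀ hfact (by linear_combination hsucc)

lemma multichoose_nonneg {a : ℝ} (ha : 0 ≤ a) (n : ℕ) : 0 ≤ Ring.multichoose a n := by
  induction n with
  | zero => simp
  | succ n ih =>
    rw [multichoose_succ]
    exact mul_nonneg ih (by positivity)

lemma multichoose_neg_succ_nonpos {a : ℝ} (ha₀ : 0 ≤ a) (ha₁ : a ≤ 1) (n : ℕ) :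
    Ring.multichoose (-a) (n + 1) ≤ 0 := by
  induction n with
  | zero => simpa using ha₀
  | succ n ih =>
    rw [multichoose_succ]
    push_cast
    exact mul_nonpos_of_nonpos_of_nonneg ih
      (div_nonneg (by linarith [n.cast_nonneg (α := ℝ)]) (by positivity))

lemma prod_range_succ_add_eq (y : ℝ) (n : ℕ) :
    ∏ j ∈ Finset.range (n + 1), (y + j) = y * (n.factorial * Ring.multichoose (y + 1) n) := by
  induction n with
  | zero => simp
  | succ n ih =>
    rw [Finset.prod_range_succ, ih, multichoose_succ, Nat.factorial_succ]
    push_cast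
    field_simp
    ring

lemma summable_pow_mul_eval {𝕜 : Type*} [NormedField 𝕜] {r : 𝕜} (hr : ‖r‖ < 1)
    (p : Polynomial 𝕜) : Summable fun k : ℕ => r ^ k * p.eval (k : 𝕜) := by
  simp_rw [Polynomial.eval_eq_sum_range, Finset.mul_sum]
  refine summable_sum fun i _ => ?_
  exact ((summable_pow_mul_geometric_of_norm_lt_one i hr).mul_left (p.coeff i)).congr
    fun k => by ring

lemma summable_pow_mul_multichoose {r : ℝ} (hr : ‖r‖ < 1) (ρ a : ℝ) (n : ℕ) :
    Summable fun k : ℕ => r ^ k * Ring.multichoose (ρ * k + a) n := by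
  let p : Polynomial ℝ := Polynomial.C (n.factorial : ℝ)⁻¹ *
    (ascPochhammer ℝ n).comp (Polynomial.C ρ * Polynomial.X + Polynomial.C a)
  refine (summable_pow_mul_eval hr p).congr fun k => ?_
  have hp : p.eval (k : ℝ) = Ring.multichoose (ρ * k + a) n := by
    simp only [p, Polynomial.eval_mul, Polynomial.eval_C, Polynomial.eval_comp,
      Polynomial.eval_add, Polynomial.eval_X, ← factorial_mul_multichoose]
    exact inv_mul_cancel_left₀ (by positivity) _
  rw [hp]

end Multichoose

section NegBinomialSeries

/-- The binomial series `(1 - X) ^ (-a)`, with coefficients `a (a + 1) ⋯ (a + n - 1) / n!`. -/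
noncomputable def negBinomialSeries (a : ℝ) : ℝ⟦X⟧ :=
  PowerSeries.mk (Ring.multichoose a)

@[simp]
lemma coeff_negBinomialSeries (a : ℝ) (n : ℕ) :
    coeff n (negBinomialSeries a) = Ring.multichoose a n :=
  coeff_mk n _

lemma negBinomialSeries_eq_rescale (a : ℝ) :
    negBinomialSeries a = rescale (-1 : ℝ) (binomialSeries ℝ (-a)) := by
  ext n
  rw [coeff_negBinomialSeries, coeff_rescale, binomialSeries_coeff, Ring.choose_neg', smul_eq_mul,
    mul_one, Units.smul_def, Int.coe_negOnePow_natCast, zsmul_eq_mul]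
  push_cast
  rw [← mul_assoc, ← mul_pow, neg_one_mul, neg_neg, one_pow, one_mul]

lemma negBinomialSeries_add (a b : ℝ) :
    negBinomialSeries (a + b) = negBinomialSeries a * negBinomialSeries b := by
  simp only [negBinomialSeries_eq_rescale, neg_add, binomialSeries_add, map_mul]

lemma negBinomialSeries_zero : negBinomialSeries 0 = 1 := by
  simp only [negBinomialSeries_eq_rescale, neg_zero, binomialSeries_zero, map_one]

lemma negBinomialSeries_neg_one : negBinomialSeries (-1) = 1 - X := by
  have hgeom : negBinomialSeries 1 = PowerSeries.mk 1 := by ext n; simp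
  have hleft : negBinomialSeries (-1) * negBinomialSeries 1 = 1 := by
    rw [← negBinomialSeries_add, neg_add_cancel, negBinomialSeries_zero]
  exact left_inv_eq_right_inv hleft (hgeom ▸ mk_one_mul_one_sub_eq_one ℝ)

end NegBinomialSeries

section GrunwaldLetnikov

open scoped PowerSeries.WithPiTopology

/-- The generating function of the implicit Grünwald–Letnikov scheme for `D^ρ u = -λ u`, `u(0) = 1`,
where `q = λ h ^ ρ` for the step `h`. Its `n`-th coefficient approximates `E_{ρ,1}(-q n ^ ρ)`. -/
noncomputable def grunwaldLetnikovSeries (ρ q : ℝ) : ℝ⟦X⟧ :=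
  negBinomialSeries (1 - ρ) * (negBinomialSeries (-ρ) + C q)⁻¹

variable {ρ q : ℝ}

lemma constantCoeff_negBinomialSeries_add_C (a q : ℝ) :
    constantCoeff (negBinomialSeries a + C q) = 1 + q := by
  rw [map_add, constantCoeff_C, ← coeff_zero_eq_constantCoeff_apply, coeff_negBinomialSeries,
    Ring.multichoose_zero_right]

lemma grunwaldLetnikovSeries_mul (hq : 1 + q ≠ 0) :
    grunwaldLetnikovSeries ρ q * (negBinomialSeries (-ρ) + C q) = negBinomialSeries (1 - ρ) :=
  (PowerSeries.eq_mul_inv_iff_mul_eq (by rwa [constantCoeff_negBinomialSeries_add_C])).1 rfl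

lemma grunwaldLetnikovSeries_volterra (hq : 1 + q ≠ 0) :
    grunwaldLetnikovSeries ρ q + C q * (negBinomialSeries ρ * grunwaldLetnikovSeries ρ q) =
      negBinomialSeries 1 := by
  have hinv : negBinomialSeries ρ * negBinomialSeries (-ρ) = 1 := by
    rw [← negBinomialSeries_add, add_neg_cancel, negBinomialSeries_zero]
  have hone : negBinomialSeries ρ * negBinomialSeries (1 - ρ) = negBinomialSeries 1 := by
    rw [← negBinomialSeries_add, add_sub_cancel]
  rw [← hone, ← grunwaldLetnikovSeries_mul hq]
  linear_combination (-grunwaldLetnikovSeries ρ q) * hinv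

lemma coeff_grunwaldLetnikovSeries (hq : ‖q‖ < 1) (n : ℕ) :
    coeff n (grunwaldLetnikovSeries ρ q) =
      ∑' k : ℕ, (-q) ^ k * Ring.multichoose (ρ * k + 1) n := by
  have hq₁ : 1 + q ≠ 0 := by linarith [neg_lt_of_abs_lt hq]
  have hsummable (a : ℝ) : Summable fun k : ℕ => C ((-q) ^ k) * negBinomialSeries (ρ * k + a) :=
    (WithPiTopology.summable_iff_summable_coeff ℝ).2 fun n => by
      simpa only [coeff_C_mul, coeff_negBinomialSeries] using
        summable_pow_mul_multichoose (by rwa [norm_neg]) ρ a n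
  -- Multiplying by `(1 - X) ^ ρ + q` makes the series telescope.
  have htelescope (k : ℕ) :
      C ((-q) ^ k) * negBinomialSeries (ρ * k + 1) * (negBinomialSeries (-ρ) + C q) =
        C ((-q) ^ k) * negBinomialSeries (ρ * k + (1 - ρ)) -
          C ((-q) ^ (k + 1)) * negBinomialSeries (ρ * (k + 1 : ℕ) + (1 - ρ)) := by
    rw [show ρ * k + (1 - ρ) = ρ * k + 1 + -ρ by ring, negBinomialSeries_add (ρ * k + 1),
      show ρ * (k + 1 : ℕ) + (1 - ρ) = ρ * k + 1 by push_cast; ring, pow_succ, map_mul, map_neg]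
    ring
  have hmul : (∑' k : ℕ, C ((-q) ^ k) * negBinomialSeries (ρ * k + 1)) *
      (negBinomialSeries (-ρ) + C q) = negBinomialSeries (1 - ρ) := by
    rw [← (hsummable 1).tsum_mul_right]
    simp_rw [htelescope]
    rw [(hsummable (1 - ρ)).tsum_sub ((summable_nat_add_iff 1).2 (hsummable (1 - ρ))),
      (hsummable (1 - ρ)).tsum_eq_zero_add]
    simp
  have hseries : grunwaldLetnikovSeries ρ q =
      ∑' k : ℕ, C ((-q) ^ k) * negBinomialSeries (ρ * k + 1) :=
    ((PowerSeries.eq_mul_inv_iff_mul_eq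
      (by rwa [constantCoeff_negBinomialSeries_add_C])).2 hmul).symm
  have hcoeff := (WithPiTopology.hasSum_iff_hasSum_coeff ℝ).1 (hseries ▸ (hsummable 1).hasSum) n
  simpa only [coeff_C_mul, coeff_negBinomialSeries] using hcoeff.tsum_eq.symm

lemma coeff_nonneg_of_mul_negBinomialSeries_add_C (hρ₀ : 0 ≤ ρ) (hρ₁ : ρ ≤ 1) (hq : 0 ≤ q)
    {P Q : ℝ⟦X⟧} (hPQ : P * (negBinomialSeries (-ρ) + C q) = Q) (hQ : ∀ n, 0 ≤ coeff n Q) (n : ℕ) :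
    0 ≤ coeff n P := by
  refine coeff_nonneg_of_mul_eq hPQ ?_ (fun n => ?_) hQ n
  · rw [coeff_zero_eq_constantCoeff_apply, constantCoeff_negBinomialSeries_add_C]
    linarith
  · rw [map_add, coeff_negBinomialSeries, coeff_succ_C, add_zero]
    exact multichoose_neg_succ_nonpos hρ₀ hρ₁ n

lemma coeff_grunwaldLetnikovSeries_nonneg (hρ₀ : 0 ≤ ρ) (hρ₁ : ρ ≤ 1) (hq : 0 ≤ q) (n : ℕ) :
    0 ≤ coeff n (grunwaldLetnikovSeries ρ q) :=
  coeff_nonneg_of_mul_negBinomialSeries_add_C hρ₀ hρ₁ hq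
    (grunwaldLetnikovSeries_mul (by positivity))
    (fun n => by simpa using multichoose_nonneg (sub_nonneg.2 hρ₁) n) n

lemma antitone_coeff_grunwaldLetnikovSeries (hρ₀ : 0 ≤ ρ) (hρ₁ : ρ ≤ 1) (hq : 0 ≤ q) :
    Antitone fun n => coeff n (grunwaldLetnikovSeries ρ q) := by
  set G := negBinomialSeries (-ρ) + C q with hG
  have hG₀ : constantCoeff G ≠ 0 := by
    rw [constantCoeff_negBinomialSeries_add_C]; positivity
  have hinv : G⁻¹ * G = 1 := PowerSeries.inv_mul_cancel G hG₀
  have hinv_nonneg (n : ℕ) : 0 ≤ coeff n G⁻¹ :=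
    coeff_nonneg_of_mul_negBinomialSeries_add_C hρ₀ hρ₁ hq hinv
      (fun n => by rw [coeff_one]; split_ifs <;> norm_num) n
  have hdiff : grunwaldLetnikovSeries ρ q * (1 - X) = 1 - C q * G⁻¹ := by
    have hshift : negBinomialSeries (1 - ρ) * (1 - X) = negBinomialSeries (-ρ) := by
      rw [← negBinomialSeries_neg_one, ← negBinomialSeries_add]
      congr 1
      ring
    rw [grunwaldLetnikovSeries, ← hG, mul_right_comm, hshift, eq_sub_of_add_eq hG.symm]
    linear_combination hinv
  refine antitone_nat_of_succ_le fun n => ?_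
  have hstep := congrArg (coeff (n + 1)) hdiff
  simp only [mul_sub, mul_one, map_sub, coeff_succ_mul_X, coeff_C_mul, coeff_one,
    Nat.add_one_ne_zero, if_false] at hstep
  linarith [mul_nonneg hq (hinv_nonneg (n + 1))]

lemma multichoose_mul_coeff_grunwaldLetnikovSeries_le (hρ₀ : 0 ≤ ρ) (hρ₁ : ρ ≤ 1) (hq : 0 ≤ q)
    (n : ℕ) :
    q * Ring.multichoose (ρ + 1) n * coeff n (grunwaldLetnikovSeries ρ q) ≤
      1 - coeff n (grunwaldLetnikovSeries ρ q) := by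
  have hvolterra := congrArg (coeff n) (grunwaldLetnikovSeries_volterra (ρ := ρ)
    (by positivity : 1 + q ≠ 0))
  rw [map_add, coeff_C_mul, coeff_negBinomialSeries, Ring.multichoose_one] at hvolterra
  have hconv : Ring.multichoose (ρ + 1) n * coeff n (grunwaldLetnikovSeries ρ q) ≤
      coeff n (negBinomialSeries ρ * grunwaldLetnikovSeries ρ q) := by
    rw [← coeff_negBinomialSeries, negBinomialSeries_add, coeff_mul, coeff_mul, Finset.sum_mul]
    refine Finset.sum_le_sum fun p hp => ?_
    rw [coeff_negBinomialSeries, coeff_negBinomialSeries, Ring.multichoose_one, mul_one]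
    have hp₂ : p.2 ≤ n := Finset.HasAntidiagonal.antidiagonal.snd_le hp
    exact mul_le_mul_of_nonneg_left (antitone_coeff_grunwaldLetnikovSeries hρ₀ hρ₁ hq hp₂)
      (multichoose_nonneg hρ₀ _)
  rw [mul_assoc]
  linarith [mul_le_mul_of_nonneg_left hconv hq]

end GrunwaldLetnikov

section InvGammaSeq

/-- Euler's approximation `n ^ (-y) (y + 1) ⋯ (y + n) / n!` of `1 / Γ(y + 1)`, which is
`1 / (y * Real.GammaSeq y n)` where the latter makes sense. -/
noncomputable def invGammaSeq (y : ℝ) (n : ℕ) : ℝ :=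
  (n : ℝ) ^ (-y) * Ring.multichoose (y + 1) n

variable {y : ℝ}

lemma invGammaSeq_nonneg (hy : 0 ≤ y) (n : ℕ) : 0 ≤ invGammaSeq y n :=
  mul_nonneg (by positivity) (multichoose_nonneg (by positivity) n)

lemma one_add_div_le_div_rpow (hy : 0 ≤ y) {x : ℝ} (hx : 0 < x) :
    1 + y / (x + 1) ≤ ((x + 1) / x) ^ y := by
  have hlog : 1 / (x + 1) ≤ Real.log ((x + 1) / x) := by
    convert Real.one_sub_inv_le_log_of_pos (show 0 < (x + 1) / x by positivity) using 1
    field_simp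
    ring
  calc 1 + y / (x + 1) ≤ Real.exp (1 / (x + 1) * y) := by
        rw [one_div_mul_eq_div, add_comm]; exact Real.add_one_le_exp _
    _ ≤ Real.exp (Real.log ((x + 1) / x) * y) := by gcongr
    _ = ((x + 1) / x) ^ y := (Real.rpow_def_of_pos (by positivity) y).symm

lemma antitoneOn_invGammaSeq (hy : 0 ≤ y) : AntitoneOn (invGammaSeq y) (Set.Ici 1) := by
  refine antitoneOn_nat_Ici_of_succ_le fun n hn => ?_
  have hn₀ : (0 : ℝ) < n := by exact_mod_cast hn
  have hfactor : ((n : ℝ) + 1) ^ (-y) * ((y + 1 + n) / (n + 1)) ≤ (n : ℝ) ^ (-y) := by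
    rw [Real.rpow_neg (by positivity), Real.rpow_neg hn₀.le, inv_mul_le_iff₀ (by positivity),
      ← div_eq_mul_inv, ← Real.div_rpow (by positivity) hn₀.le]
    have hsplit : (y + 1 + n) / ((n : ℝ) + 1) = 1 + y / (n + 1) := by field_simp; ring
    exact hsplit ▸ one_add_div_le_div_rpow hy hn₀
  have hnonneg : 0 ≤ Ring.multichoose (y + 1) n := multichoose_nonneg (by positivity) n
  calc invGammaSeq y (n + 1)
      = ((n : ℝ) + 1) ^ (-y) * ((y + 1 + n) / (n + 1)) * Ring.multichoose (y + 1) n := by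
        rw [invGammaSeq, multichoose_succ]; push_cast; ring
    _ ≤ invGammaSeq y n := mul_le_mul_of_nonneg_right hfactor hnonneg

lemma invGammaSeq_eq_inv (hy : 0 < y) {n : ℕ} (hn : 0 < n) :
    invGammaSeq y n = (y * Real.GammaSeq y n)⁻¹ := by
  have hpow : (n : ℝ) ^ y ≠ 0 := by positivity
  have hfact : (n.factorial : ℝ) ≠ 0 := by positivity
  rw [invGammaSeq, Real.GammaSeq, prod_range_succ_add_eq, Real.rpow_neg n.cast_nonneg]
  field_simp

lemma tendsto_invGammaSeq (hy : 0 ≤ y) :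
    Tendsto (invGammaSeq y) atTop (𝓝 (Real.Gamma (y + 1))⁻¹) := by
  rcases hy.eq_or_lt with rfl | hy
  · have hone : invGammaSeq 0 = fun _ => 1 := by
      funext n; simp [invGammaSeq]
    simp [hone]
  · rw [Real.Gamma_add_one hy.ne']
    refine Tendsto.congr' ?_ (((Real.GammaSeq_tendsto_Gamma y).const_mul y).inv₀
      (mul_pos hy (Real.Gamma_pos_of_pos hy)).ne')
    filter_upwards [eventually_gt_atTop 0] with n hn using (invGammaSeq_eq_inv hy hn).symm

lemma mul_rpow_neg_pow_mul_multichoose (z ρ : ℝ) (n k : ℕ) :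
    (z * (n : ℝ) ^ (-ρ)) ^ k * Ring.multichoose (ρ * k + 1) n = z ^ k * invGammaSeq (ρ * k) n := by
  rw [invGammaSeq, mul_pow, ← Real.rpow_mul_natCast n.cast_nonneg, neg_mul, mul_assoc]

end InvGammaSeq

section MittagLeffler

variable {ρ t : ℝ}

lemma eventually_norm_mul_rpow_neg_lt_one (hρ : 0 < ρ) (z : ℝ) :
    ∀ᶠ n : ℕ in atTop, ‖z * (n : ℝ) ^ (-ρ)‖ < 1 := by
  have hlim : Tendsto (fun n : ℕ => ‖z * (n : ℝ) ^ (-ρ)‖) atTop (𝓝 0) := by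
    simpa using (((tendsto_rpow_neg_atTop hρ).comp tendsto_natCast_atTop_atTop).const_mul z).norm
  exact hlim.eventually_lt_const one_pos

lemma exists_summable_bound_pow_mul_invGammaSeq (hρ : 0 < ρ) (z : ℝ) :
    ∃ b : ℕ → ℝ, Summable b ∧ ∀ᶠ n in atTop, ∀ k : ℕ, ‖z ^ k * invGammaSeq (ρ * k) n‖ ≤ b k := by
  obtain ⟨n₀, hn₀, hz⟩ :=
    ((eventually_ge_atTop 1).and (eventually_norm_mul_rpow_neg_lt_one hρ z)).exists
  refine ⟨fun k => ‖z ^ k * invGammaSeq (ρ * k) n₀‖, ?_, ?_⟩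
  · simpa only [mul_rpow_neg_pow_mul_multichoose] using
      (summable_pow_mul_multichoose hz ρ 1 n₀).norm
  · filter_upwards [eventually_ge_atTop n₀] with n hn k
    have hρk : 0 ≤ ρ * k := by positivity
    rw [norm_mul, norm_mul, Real.norm_of_nonneg (invGammaSeq_nonneg hρk n),
      Real.norm_of_nonneg (invGammaSeq_nonneg hρk n₀)]
    exact mul_le_mul_of_nonneg_left
      (antitoneOn_invGammaSeq hρk hn₀ (hn₀.trans hn) hn) (norm_nonneg _)

lemma tendsto_pow_mul_invGammaSeq (hρ : 0 ≤ ρ) (z : ℝ) (k : ℕ) :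
    Tendsto (fun n => z ^ k * invGammaSeq (ρ * k) n) atTop
      (𝓝 (z ^ k / Real.Gamma (ρ * k + 1))) :=
  (tendsto_invGammaSeq (by positivity)).const_mul (z ^ k)

lemma summable_mittagLeffler_one (hρ : 0 < ρ) (z : ℝ) :
    Summable fun k : ℕ => z ^ k / Real.Gamma (ρ * k + 1) := by
  obtain ⟨b, hb, hbound⟩ := exists_summable_bound_pow_mul_invGammaSeq hρ z
  exact Summable.of_norm_bounded hb fun k =>
    le_of_tendsto (tendsto_pow_mul_invGammaSeq hρ.le z k).norm (hbound.mono fun n hn => hn k)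

lemma tendsto_tsum_pow_mul_invGammaSeq (hρ : 0 < ρ) (z : ℝ) :
    Tendsto (fun n => ∑' k : ℕ, z ^ k * invGammaSeq (ρ * k) n) atTop
      (𝓝 (mittagLeffler ρ 1 z)) := by
  obtain ⟨b, hb, hbound⟩ := exists_summable_bound_pow_mul_invGammaSeq hρ z
  exact tendsto_tsum_of_dominated_convergence hb (tendsto_pow_mul_invGammaSeq hρ.le z) hbound

lemma tendsto_coeff_grunwaldLetnikovSeries (hρ : 0 < ρ) (t : ℝ) :
    Tendsto (fun n : ℕ => coeff n (grunwaldLetnikovSeries ρ (t * (n : ℝ) ^ (-ρ)))) atTop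
      (𝓝 (mittagLeffler ρ 1 (-t))) := by
  refine (tendsto_tsum_pow_mul_invGammaSeq hρ (-t)).congr' ?_
  filter_upwards [eventually_norm_mul_rpow_neg_lt_one hρ t] with n hn
  simp_rw [coeff_grunwaldLetnikovSeries hn, ← neg_mul, mul_rpow_neg_pow_mul_multichoose]

lemma mittagLeffler_one_neg_nonneg (hρ : 0 < ρ) (hρ₁ : ρ ≤ 1) (ht : 0 ≤ t) :
    0 ≤ mittagLeffler ρ 1 (-t) :=
  ge_of_tendsto' (tendsto_coeff_grunwaldLetnikovSeries hρ t) fun n =>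
    coeff_grunwaldLetnikovSeries_nonneg hρ.le hρ₁ (by positivity) n

lemma mul_mittagLeffler_one_neg_le (hρ : 0 < ρ) (hρ₁ : ρ ≤ 1) (ht : 0 ≤ t) :
    t * (Real.Gamma (ρ + 1))⁻¹ * mittagLeffler ρ 1 (-t) ≤ 1 - mittagLeffler ρ 1 (-t) := by
  have hlim := tendsto_coeff_grunwaldLetnikovSeries hρ t
  refine le_of_tendsto_of_tendsto' (((tendsto_invGammaSeq hρ.le).const_mul t).mul hlim)
    (hlim.const_sub 1) fun n => ?_
  rw [invGammaSeq, ← mul_assoc]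
  exact multichoose_mul_coeff_grunwaldLetnikovSeries_le hρ.le hρ₁ (by positivity) n

lemma mittagLeffler_zero (ρ μ : ℝ) : mittagLeffler ρ μ 0 = (Real.Gamma μ)⁻¹ := by
  rw [mittagLeffler, tsum_eq_single 0 fun k hk => by simp [hk]]
  simp

lemma mittagLeffler_one_eq_one_add (hρ : 0 < ρ) (z : ℝ) :
    mittagLeffler ρ 1 z = 1 + z * mittagLeffler ρ (ρ + 1) z := by
  rw [mittagLeffler, (summable_mittagLeffler_one hρ z).tsum_eq_zero_add, mittagLeffler,
    ← tsum_mul_left]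
  congr 1
  · simp
  · refine tsum_congr fun k => ?_
    rw [show ρ * ((k + 1 : ℕ) : ℝ) + 1 = ρ * k + (ρ + 1) by push_cast; ring]
    ring

lemma mittagLeffler_one_neg_le (hρ : 0 < ρ) (hρ₁ : ρ ≤ 1) (ht : 0 ≤ t) :
    mittagLeffler ρ 1 (-t) ≤ Real.Gamma (ρ + 1) * mittagLeffler ρ (ρ + 1) (-t) := by
  have hΓ : 0 < Real.Gamma (ρ + 1) := Real.Gamma_pos_of_pos (by positivity)
  rcases ht.eq_or_lt with rfl | ht
  · simp [mittagLeffler_zero, hΓ.ne']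
  · have hle := mul_mittagLeffler_one_neg_le hρ hρ₁ ht.le
    rw [show 1 - mittagLeffler ρ 1 (-t) = t * mittagLeffler ρ (ρ + 1) (-t) by
      linarith [mittagLeffler_one_eq_one_add hρ (-t)], mul_assoc] at hle
    exact (inv_mul_le_iff₀ hΓ).1 (le_of_mul_le_mul_left hle ht)

lemma mittagLeffler_add_one_neg_pos (hρ : 0 < ρ) (hρ₁ : ρ ≤ 1) (ht : 0 ≤ t) :
    0 < mittagLeffler ρ (ρ + 1) (-t) := by
  have hΓ : 0 < Real.Gamma (ρ + 1) := Real.Gamma_pos_of_pos (by positivity)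
  rcases (mittagLeffler_one_neg_nonneg hρ hρ₁ ht).eq_or_lt with hzero | hpos
  · have hone : t * mittagLeffler ρ (ρ + 1) (-t) = 1 := by
      linarith [mittagLeffler_one_eq_one_add hρ (-t)]
    exact pos_of_mul_pos_right (one_pos.trans_eq hone.symm) ht
  · exact pos_of_mul_pos_right (hpos.trans_le (mittagLeffler_one_neg_le hρ hρ₁ ht)) hΓ.le

lemma norm_mittagLeffler_div_le (hρ : 0 < ρ) (hρ₁ : ρ ≤ 1) (ht : 0 ≤ t) {s : ℝ} (hs : 0 < s) :
    ‖mittagLeffler ρ 1 (-t) / (s * mittagLeffler ρ (ρ + 1) (-t))‖ ≤ Real.Gamma (ρ + 1) / s := by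
  have hpos := mittagLeffler_add_one_neg_pos hρ hρ₁ ht
  rw [Real.norm_of_nonneg
    (div_nonneg (mittagLeffler_one_neg_nonneg hρ hρ₁ ht) (by positivity)), mul_comm s, ← div_div]
  gcongr
  exact (div_le_iff₀ hpos).2 (mittagLeffler_one_neg_le hρ hρ₁ ht)

end MittagLeffler

section Series

variable {ι : Type*}

lemma summable_and_sq_tsum_le_of_sq_le_mul {r f g : ι → ℝ} (hr : ∀ i, 0 ≤ r i) (hf₀ : ∀ i, 0 ≤ f i)
    (hg₀ : ∀ i, 0 ≤ g i) (hf : Summable f) (hg : Summable g) (h : ∀ i, r i ^ 2 ≤ f i * g i) :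
    Summable r ∧ (∑' i, r i) ^ 2 ≤ (∑' i, f i) * ∑' i, g i := by
  have hfg : 0 ≤ (∑' i, f i) * ∑' i, g i := mul_nonneg (tsum_nonneg hf₀) (tsum_nonneg hg₀)
  have hfinite (s : Finset ι) : ∑ i ∈ s, r i ≤ √((∑' i, f i) * ∑' i, g i) := by
    refine Real.le_sqrt_of_sq_le ?_
    calc (∑ i ∈ s, r i) ^ 2 ≤ (∑ i ∈ s, f i) * ∑ i ∈ s, g i :=
          Finset.sum_sq_le_sum_mul_sum_of_sq_le_mul s (fun i _ => hf₀ i) (fun i _ => hg₀ i)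
            fun i _ => h i
      _ ≤ (∑' i, f i) * ∑' i, g i :=
          mul_le_mul (hf.sum_le_tsum s fun i _ => hf₀ i) (hg.sum_le_tsum s fun i _ => hg₀ i)
            (Finset.sum_nonneg fun i _ => hg₀ i) (tsum_nonneg hf₀)
  exact ⟨summable_of_sum_le hr hfinite,
    (Real.le_sqrt (tsum_nonneg hr) hfg).1 (Real.tsum_le_of_sum_le hr hfinite)⟩

lemma summable_norm_mul_and_sq_tsum_le {R : Type*} [SeminormedRing R] {w : ι → ℝ} {s K : ℝ}
    {φ g : ι → R} (hw : ∀ i, 0 < w i) (hg : ∀ i, ‖g i‖ ≤ K) (hws : Summable fun i => w i ^ (-s))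
    (hφ : Summable fun i => w i ^ s * ‖φ i‖ ^ 2) :
    (Summable fun i => ‖φ i * g i‖) ∧
      (∑' i, ‖φ i * g i‖) ^ 2 ≤ (∑' i, K ^ 2 * w i ^ (-s)) * ∑' i, w i ^ s * ‖φ i‖ ^ 2 := by
  refine summable_and_sq_tsum_le_of_sq_le_mul (fun i => norm_nonneg _)
    (fun i => mul_nonneg (sq_nonneg K) (Real.rpow_nonneg (hw i).le _))
    (fun i => mul_nonneg (Real.rpow_nonneg (hw i).le _) (sq_nonneg _))
    (hws.mul_left (K ^ 2)) hφ fun i => ?_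
  have hcancel : w i ^ (-s) * w i ^ s = 1 := by
    rw [← Real.rpow_add (hw i), neg_add_cancel, Real.rpow_zero]
  calc ‖φ i * g i‖ ^ 2 ≤ (‖φ i‖ * K) ^ 2 := by
        gcongr
        exact (norm_mul_le _ _).trans (mul_le_mul_of_nonneg_left (hg i) (norm_nonneg _))
    _ = K ^ 2 * w i ^ (-s) * (w i ^ s * ‖φ i‖ ^ 2) := by
        linear_combination (-(K ^ 2 * ‖φ i‖ ^ 2)) * hcancel

lemma exists_continuous_tendstoUniformly_hasSum {X E : Type*} [TopologicalSpace X]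
    [NormedAddCommGroup E] [CompleteSpace E] {F : ι → X → E} {u : ι → ℝ}
    (hF : ∀ i, Continuous (F i)) (hu : Summable u) (hFu : ∀ i x, ‖F i x‖ ≤ u i) :
    ∃ f : X → E, Continuous f ∧
      TendstoUniformly (fun (s : Finset ι) x => ∑ i ∈ s, F i x) f atTop ∧
      (∀ x, HasSum (fun i => F i x) (f x)) ∧ ∀ x, ‖f x‖ ≤ ∑' i, u i :=
  ⟨fun x => ∑' i, F i x, continuous_tsum hF hu hFu, tendstoUniformly_tsum hu hFu,
    fun x => (Summable.of_norm_bounded hu fun i => hFu i x).hasSum,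
    fun x => tsum_of_norm_bounded hu.hasSum fun i => hFu i x⟩

end Series

section Lattice

variable {ι : Type*} [Fintype ι]

lemma summable_sqrt_sum_sq_rpow {r : ℝ} (hr : r < -(Fintype.card ι : ℝ)) :
    Summable fun n : ι → ℤ => √(∑ i, (n i : ℝ) ^ 2) ^ r := by
  let b := (EuclideanSpace.basisFun ι ℝ).toBasis
  let L : Submodule ℤ (EuclideanSpace ℝ ι) := Submodule.span ℤ (Set.range b)
  have hrank : Module.finrank ℤ L = Fintype.card ι := by
    rw [ZLattice.rank ℝ L, finrank_euclideanSpace]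
  have hmem (n : ι → ℤ) : WithLp.toLp 2 (fun i => (n i : ℝ)) ∈ L :=
    (b.mem_span_iff_repr_mem ℤ _).2 fun i => ⟨n i, by simp [b]⟩
  have hinj : Function.Injective fun n : ι → ℤ => (⟨_, hmem n⟩ : L) := fun n n' h => by
    have hcoord := WithLp.toLp_injective 2 (congrArg Subtype.val h)
    exact funext fun i => Int.cast_injective (congrFun hcoord i)
  refine ((ZLattice.summable_norm_rpow L r (by rwa [hrank])).comp_injective hinj).congr fun n => ?_
  simp [EuclideanSpace.norm_eq]

lemma summable_add_one_rpow_of_le {m c τ : ℝ} (hm : 0 < m) (hc : 0 < c) {A : (ι → ℤ) → ℝ}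
    (hA : ∀ n, c * √(∑ i, (n i : ℝ) ^ 2) ^ m ≤ A n) (hτ : Fintype.card ι / (2 * m) < τ) :
    Summable fun n => (A n + 1) ^ (-(2 * τ)) := by
  have hτ₀ : 0 < τ := lt_of_le_of_lt (by positivity) hτ
  have hexp : m * -(2 * τ) < -(Fintype.card ι : ℝ) := by
    rw [div_lt_iff₀ (by positivity)] at hτ
    linarith
  refine Summable.of_norm_bounded_eventually
    ((summable_sqrt_sum_sq_rpow hexp).mul_left (c ^ (-(2 * τ)))) ?_
  filter_upwards [(Set.finite_singleton (0 : ι → ℤ)).compl_mem_cofinite] with n hn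
  have hnorm : 0 < √(∑ i, (n i : ℝ) ^ 2) := by
    obtain ⟨i, hi⟩ := Function.ne_iff.1 hn
    refine Real.sqrt_pos.2 (Finset.sum_pos' (fun i _ => sq_nonneg _) ⟨i, Finset.mem_univ i, ?_⟩)
    exact sq_pos_of_ne_zero (Int.cast_ne_zero.2 hi)
  have hmajor : 0 < c * √(∑ i, (n i : ℝ) ^ 2) ^ m := by positivity
  have hbase : c * √(∑ i, (n i : ℝ) ^ 2) ^ m ≤ A n + 1 := by linarith [hA n]
  calc ‖(A n + 1) ^ (-(2 * τ))‖ = (A n + 1) ^ (-(2 * τ)) :=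
        Real.norm_of_nonneg (Real.rpow_nonneg (hmajor.le.trans hbase) _)
    _ ≤ (c * √(∑ i, (n i : ℝ) ^ 2) ^ m) ^ (-(2 * τ)) :=
        Real.rpow_le_rpow_of_nonpos hmajor hbase (by linarith)
    _ = c ^ (-(2 * τ)) * √(∑ i, (n i : ℝ) ^ 2) ^ (m * -(2 * τ)) := by
        rw [Real.mul_rpow hc.le (by positivity), ← Real.rpow_mul hnorm.le]

end Lattice

section CharFun

variable {N : ℕ}

lemma norm_charFun (n : Fin N → ℤ) (x : Fin N → ℝ) : ‖charFun n x‖ = 1 := by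
  rw [charFun, mul_comm, show ∑ i, (n i : ℂ) * (x i : ℂ) = ((∑ i, n i * x i : ℝ) : ℂ) by
    push_cast; rfl, Complex.norm_exp_ofReal_mul_I]

lemma continuous_charFun (n : Fin N → ℤ) : Continuous (charFun n) := by
  unfold charFun
  fun_prop

end CharFun

theorem stmt13_general {ι X : Type*} [TopologicalSpace X] {ρ T τ : ℝ} (hρ : 0 < ρ) (hρ1 : ρ ≤ 1)
    (hT : 0 < T) {A : ι → ℝ} (hA0 : ∀ n, 0 ≤ A n) (hA : Summable fun n => (A n + 1) ^ (-(2 * τ)))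
    {e : ι → X → ℂ} (he : ∀ n, Continuous (e n)) (he1 : ∀ n x, ‖e n x‖ ≤ 1) :
    ∃ C : ℝ, 0 < C ∧ ∀ φ : ι → ℂ,
      Summable (fun n => (A n + 1) ^ (2 * τ) * ‖φ n‖ ^ 2) →
      (Summable fun n =>
        ‖φ n * ((mittagLeffler ρ 1 (-A n * T ^ ρ)
            / (T ^ ρ * mittagLeffler ρ (ρ + 1) (-A n * T ^ ρ)) : ℝ) : ℂ)‖) ∧
      ∃ f₂ : X → ℂ, Continuous f₂ ∧
        TendstoUniformly
          (fun (s : Finset ι) (x : X) =>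
            ∑ n ∈ s, φ n * ((mittagLeffler ρ 1 (-A n * T ^ ρ)
              / (T ^ ρ * mittagLeffler ρ (ρ + 1) (-A n * T ^ ρ)) : ℝ) : ℂ) * e n x)
          f₂ atTop ∧
        (∀ x, HasSum
          (fun n => φ n * ((mittagLeffler ρ 1 (-A n * T ^ ρ)
            / (T ^ ρ * mittagLeffler ρ (ρ + 1) (-A n * T ^ ρ)) : ℝ) : ℂ) * e n x)
          (f₂ x)) ∧
        ∀ x, ‖f₂ x‖ ^ 2 ≤ (C / T ^ ρ) * ∑' n, (A n + 1) ^ (2 * τ) * ‖φ n‖ ^ 2 := by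
  have hTρ : 0 < T ^ ρ := Real.rpow_pos_of_pos hT ρ
  have hw (n : ι) : 0 < A n + 1 := by linarith [hA0 n]
  set K : ℝ := Real.Gamma (ρ + 1) / T ^ ρ
  set g : ι → ℝ := fun n => mittagLeffler ρ 1 (-A n * T ^ ρ) /
    (T ^ ρ * mittagLeffler ρ (ρ + 1) (-A n * T ^ ρ))
  have hg (n : ι) : ‖g n‖ ≤ K := by
    simpa only [g, neg_mul] using
      norm_mittagLeffler_div_le hρ hρ1 (mul_nonneg (hA0 n) hTρ.le) hTρ
  have hZ : 0 ≤ ∑' n, K ^ 2 * (A n + 1) ^ (-(2 * τ)) :=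
    tsum_nonneg fun n => mul_nonneg (sq_nonneg K) (Real.rpow_nonneg (hw n).le _)
  refine ⟨T ^ ρ * ((∑' n, K ^ 2 * (A n + 1) ^ (-(2 * τ))) + 1), by positivity, fun φ hφ => ?_⟩
  obtain ⟨hc, hcauchy⟩ := summable_norm_mul_and_sq_tsum_le (g := fun n => (g n : ℂ)) hw
    (fun n => (Complex.norm_real _).trans_le (hg n)) hA hφ
  obtain ⟨f, hf, hunif, hsum, hbound⟩ := exists_continuous_tendstoUniformly_hasSum
    (F := fun n x => φ n * (g n : ℂ) * e n x) (fun n => continuous_const.mul (he n)) hc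
    fun n x => by
      rw [norm_mul]; exact mul_le_of_le_one_right (norm_nonneg _) (he1 n x)
  refine ⟨hc, f, hf, hunif, hsum, fun x => ?_⟩
  rw [mul_div_cancel_left₀ _ hTρ.ne']
  calc ‖f x‖ ^ 2 ≤ (∑' n, ‖φ n * (g n : ℂ)‖) ^ 2 := by gcongr; exact hbound x
    _ ≤ (∑' n, K ^ 2 * (A n + 1) ^ (-(2 * τ))) * ∑' n, (A n + 1) ^ (2 * τ) * ‖φ n‖ ^ 2 := hcauchy
    _ ≤ _ := mul_le_mul_of_nonneg_right (by linarith)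
      (tsum_nonneg fun n => mul_nonneg (Real.rpow_nonneg (hw n).le _) (sq_nonneg _))

/-- for `ρ ∈ (0,1]`, `T > 0`, `τ > N/(2m)`, and `φ` with
`Σ (A(n)+1)^{2τ}|φ_n|² < ∞`, the series
`f²(x) = Σ φ_n E_{ρ,1}(−A(n)T^ρ) / (T^ρ E_{ρ,ρ+1}(−A(n)T^ρ)) e^{inx}` converges
absolutely and uniformly on `𝕋^N` with
`‖f²‖²_{C(𝕋^N)} ≤ (C/T^ρ) Σ (A(n)+1)^{2τ}|φ_n|²`. -/
theorem stmt13 (N m : ℕ) (hN : 0 < N) (hm : 0 < m) (ρ T : ℝ)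
    (hρ : 0 < ρ) (hρ1 : ρ ≤ 1) (hT : 0 < T)
    (c₁ c₂ : ℝ) (hc₁ : 0 < c₁) (hc₂ : 0 < c₂)
    (A : (Fin N → ℤ) → ℝ) (hA0 : ∀ n, 0 ≤ A n)
    (hA : ∀ n, c₁ * Real.sqrt (∑ i, ((n i : ℝ)) ^ 2) ^ (m : ℕ) ≤ A n ∧
               A n ≤ c₂ * Real.sqrt (∑ i, ((n i : ℝ)) ^ 2) ^ (m : ℕ))
    (τ : ℝ) (hτ : (N : ℝ) / (2 * m) < τ) :
    ∃ C : ℝ, 0 < C ∧ ∀ φ : (Fin N → ℤ) → ℂ,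
      Summable (fun n => (A n + 1) ^ (2 * τ) * ‖φ n‖ ^ 2) →
      (Summable fun n =>
        ‖φ n * ((mittagLeffler ρ 1 (-A n * T ^ ρ)
            / (T ^ ρ * mittagLeffler ρ (ρ + 1) (-A n * T ^ ρ)) : ℝ) : ℂ)‖) ∧
      ∃ f₂ : (Fin N → ℝ) → ℂ, Continuous f₂ ∧
        TendstoUniformly
          (fun (s : Finset (Fin N → ℤ)) (x : Fin N → ℝ) =>
            ∑ n ∈ s, φ n * ((mittagLeffler ρ 1 (-A n * T ^ ρ)
              / (T ^ ρ * mittagLeffler ρ (ρ + 1) (-A n * T ^ ρ)) : ℝ) : ℂ) * charFun n x)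
          f₂ atTop ∧
        (∀ x, HasSum
          (fun n => φ n * ((mittagLeffler ρ 1 (-A n * T ^ ρ)
            / (T ^ ρ * mittagLeffler ρ (ρ + 1) (-A n * T ^ ρ)) : ℝ) : ℂ) * charFun n x)
          (f₂ x)) ∧
        ∀ x, ‖f₂ x‖ ^ 2 ≤ (C / T ^ ρ) * ∑' n, (A n + 1) ^ (2 * τ) * ‖φ n‖ ^ 2 := by
  exact stmt13_general hρ hρ1 hT hA0 (summable_add_one_rpow_of_le (Nat.cast_pos.2 hm) hc₁
    (by simpa using fun n => (hA n).1) (by simpa using hτ)) continuous_charFun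
    fun n x => (norm_charFun n x).le
end

section
/- For ρ ∈ (0,1] and λ ≥ 0, the function t ↦ t^ρ E_{ρ,ρ+1}(−λ t^ρ) is continuous on [0,∞), vanishes at t = 0, and is nondecreasing in t; in particular t^ρ E_{ρ,ρ+1}(−λ t^ρ) > 0 for t > 0. -/
/-! Termwise Beta integrals show that the function `t ^ ρ E_{ρ,ρ+1}(-λ t ^ ρ)` is the primitive of
`t ^ (ρ - 1) E_{ρ,ρ}(-λ t ^ ρ)`, so it is enough that `E_{ρ,ρ} > 0` on the real line. On the
negative half-line this is the positivity of `e(t) = t ^ (ρ - 1) E_{ρ,ρ}(-t ^ ρ)`, which solves the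
Volterra equation `e + k * e = k` with `k(t) = t ^ (ρ - 1) / Γ(ρ)`, a log-convex kernel since
`ρ ≤ 1`.

Let `T` be the first point where `e` fails to be positive. Log-convexity gives
`k(t) k(T - s) ≤ k(T) k(t - s)` for `s < t < T`, and comparing the equations at `t` and `T` yields
`k(T) e(t) ≤ k(t) ∫_t^T k(T - s) e(s) ds`. This is impossible at a point `t` where `e` is maximal on
a short interval `[a, T]`, because `k(t) ∫_t^T k(T - s) ds` is small near `T`. -/

open Filter Topology MeasureTheory Set

open Real (Gamma)

theorem rpow_mul_Gamma_le_Gamma_add {ρ x : ℝ} (hρ : 0 < ρ) (hx : 1 < x) :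
    (x - 1) ^ ρ * Gamma x ≤ Gamma (x + ρ) := by
  have hx1 : 0 < x - 1 := sub_pos.mpr hx
  have hΓ : Gamma x = (x - 1) * Gamma (x - 1) := by
    simpa only [sub_add_cancel] using Real.Gamma_add_one hx1.ne'
  have hslope := Real.convexOn_log_Gamma.slope_mono_adjacent (mem_Ioi.mpr hx1)
    (mem_Ioi.mpr (by linarith : 0 < x + ρ)) (sub_one_lt x) (lt_add_of_pos_right x hρ)
  have hlog : ρ * Real.log (x - 1) ≤ Real.log (Gamma (x + ρ)) - Real.log (Gamma x) := by
    rw [Function.comp_apply, Function.comp_apply, Function.comp_apply, sub_sub_cancel, div_one,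
      add_sub_cancel_left, le_div_iff₀ hρ] at hslope
    have hdiff : Real.log (Gamma x) - Real.log (Gamma (x - 1)) = Real.log (x - 1) := by
      rw [hΓ, Real.log_mul hx1.ne' (Real.Gamma_pos_of_pos hx1).ne', add_sub_cancel_right]
    rwa [hdiff, mul_comm] at hslope
  have hx0 : 0 < Gamma x := Real.Gamma_pos_of_pos (by linarith)
  have hxρ : 0 < Gamma (x + ρ) := Real.Gamma_pos_of_pos (by linarith)
  rw [← Real.log_le_log_iff (by positivity) hxρ, Real.log_mul (by positivity) hx0.ne',
    Real.log_rpow hx1]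
  linarith

theorem tendsto_Gamma_add_div_Gamma_atTop {ρ : ℝ} (hρ : 0 < ρ) :
    Tendsto (fun x => Gamma (x + ρ) / Gamma x) atTop atTop := by
  have hpow : Tendsto (fun x : ℝ => (x - 1) ^ ρ) atTop atTop :=
    (tendsto_rpow_atTop hρ).comp (tendsto_atTop_add_const_right _ _ tendsto_id)
  refine tendsto_atTop_mono' _ ?_ hpow
  filter_upwards [eventually_gt_atTop 1] with x hx
  rw [le_div_iff₀ (Real.Gamma_pos_of_pos (by linarith))]
  exact rpow_mul_Gamma_le_Gamma_add hρ hx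

section Series

variable {ρ μ : ℝ}

theorem summable_pow_div_Gamma (hρ : 0 < ρ) (μ z : ℝ) :
    Summable fun k : ℕ => z ^ k / Gamma (ρ * k + μ) := by
  have harg : Tendsto (fun k : ℕ => ρ * k + μ) atTop atTop :=
    tendsto_atTop_add_const_right _ _ (tendsto_natCast_atTop_atTop.const_mul_atTop hρ)
  refine summable_of_ratio_norm_eventually_le one_half_lt_one ?_
  filter_upwards [harg.eventually_gt_atTop 0, ((tendsto_Gamma_add_div_Gamma_atTop hρ).comp
    harg).eventually_ge_atTop (2 * |z|)] with k hk hratio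
  have hΓ : 0 < Gamma (ρ * k + μ) := Real.Gamma_pos_of_pos hk
  have hΓ' : 0 < Gamma (ρ * k + μ + ρ) := Real.Gamma_pos_of_pos (by linarith)
  rw [Function.comp_apply, le_div_iff₀ hΓ] at hratio
  have hstep : |z| / Gamma (ρ * k + μ + ρ) ≤ 1 / 2 * (1 / Gamma (ρ * k + μ)) := by
    rw [div_mul_div_comm, one_mul, div_le_div_iff₀ hΓ' (by positivity)]
    linarith
  have hcast : ρ * ((k + 1 : ℕ) : ℝ) + μ = ρ * k + μ + ρ := by push_cast; ring
  rw [hcast, norm_div, norm_div, norm_pow, norm_pow, Real.norm_of_nonneg hΓ.le,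
    Real.norm_of_nonneg hΓ'.le, Real.norm_eq_abs]
  calc |z| ^ (k + 1) / Gamma (ρ * k + μ + ρ)
      = |z| ^ k * (|z| / Gamma (ρ * k + μ + ρ)) := by ring
    _ ≤ |z| ^ k * (1 / 2 * (1 / Gamma (ρ * k + μ))) := by gcongr
    _ = 1 / 2 * (|z| ^ k / Gamma (ρ * k + μ)) := by ring

theorem continuous_mittagLeffler (hρ : 0 < ρ) (μ : ℝ) : Continuous (mittagLeffler ρ μ) := by
  refine continuous_iff_continuousAt.mpr fun z => ?_
  have hball : ContinuousOn (mittagLeffler ρ μ) (Metric.ball 0 (|z| + 1)) := by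
    refine continuousOn_tsum (fun k => by fun_prop)
      (summable_pow_div_Gamma hρ μ (|z| + 1)).norm fun k x hx => ?_
    rw [norm_div, norm_div, norm_pow, norm_pow, Real.norm_of_nonneg (by positivity : 0 ≤ |z| + 1)]
    gcongr
    exact (mem_ball_zero_iff.mp hx).le
  exact hball.continuousAt (Metric.isOpen_ball.mem_nhds (by simp))

theorem mittagLeffler_eq_inv_Gamma_add (hρ : 0 < ρ) (μ z : ℝ) :
    mittagLeffler ρ μ z = (Gamma μ)⁻¹ + z * mittagLeffler ρ (μ + ρ) z := by
  rw [mittagLeffler, (summable_pow_div_Gamma hρ μ z).tsum_eq_zero_add, mittagLeffler,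
    ← tsum_mul_left]
  congr 1
  · simp
  · refine tsum_congr fun k => ?_
    rw [show ρ * ((k + 1 : ℕ) : ℝ) + μ = ρ * k + (μ + ρ) by push_cast; ring]
    ring

theorem mittagLeffler_pos_of_nonneg (hρ : 0 < ρ) (hμ : 0 < μ) {z : ℝ} (hz : 0 ≤ z) :
    0 < mittagLeffler ρ μ z := by
  have hΓ (k : ℕ) : 0 < Gamma (ρ * k + μ) := Real.Gamma_pos_of_pos (by positivity)
  exact (summable_pow_div_Gamma hρ μ z).tsum_pos
    (fun k => div_nonneg (pow_nonneg hz k) (hΓ k).le) 0 (by simpa using hΓ 0)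

end Series

theorem intervalIntegrable_comp_sub_mul {f g : ℝ → ℝ} {t : ℝ} (ht : 0 < t)
    (hf : ContinuousOn f (Ioi 0)) (hf_int : IntervalIntegrable f volume 0 t)
    (hg : ContinuousOn g (Ioi 0)) (hg_int : IntervalIntegrable g volume 0 t) :
    IntervalIntegrable (fun s => f (t - s) * g s) volume 0 t := by
  have hleft {f g : ℝ → ℝ} (hf : ContinuousOn f (Ioi 0))
      (hg_int : IntervalIntegrable g volume 0 t) :
      IntervalIntegrable (fun s => f (t - s) * g s) volume 0 (t / 2) := by
    have hsub : uIcc 0 (t / 2) ⊆ uIcc 0 t := by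
      rw [uIcc_of_le (by linarith), uIcc_of_le ht.le]
      exact Icc_subset_Icc_right (by linarith)
    refine (hg_int.mono_set hsub).continuousOn_mul
      (hf.comp (by fun_prop) fun s hs => ?_)
    rw [uIcc_of_le (by linarith)] at hs
    exact mem_Ioi.mpr (by linarith [hs.2])
  have hright : IntervalIntegrable (fun s => f (t - s) * g s) volume (t / 2) t := by
    simpa only [sub_sub_cancel, sub_zero, sub_half, mul_comm] using
      ((hleft hg hf_int).comp_sub_left t).symm
  exact (hleft hf hg_int).trans hright

theorem intervalIntegrable_sub_rpow_mul_rpow {α β t : ℝ} (hα : 0 < α) (hβ : 0 < β) (ht : 0 < t) :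
    IntervalIntegrable (fun s => (t - s) ^ (α - 1) * s ^ (β - 1)) volume 0 t := by
  have hcont (γ : ℝ) : ContinuousOn (fun s : ℝ => s ^ γ) (Ioi 0) :=
    fun s hs => (Real.continuousAt_rpow_const s γ (.inl hs.ne')).continuousWithinAt
  exact intervalIntegrable_comp_sub_mul ht (hcont _)
    (intervalIntegral.intervalIntegrable_rpow' (by linarith)) (hcont _)
    (intervalIntegral.intervalIntegrable_rpow' (by linarith))

theorem integral_sub_rpow_mul_rpow {α β t : ℝ} (hα : 0 < α) (hβ : 0 < β) (ht : 0 < t) :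
    ∫ s in 0..t, (t - s) ^ (α - 1) * s ^ (β - 1) =
      Gamma α * Gamma β / Gamma (α + β) * t ^ (α + β - 1) := by
  have hbeta := Complex.betaIntegral_scaled β α ht
  rw [Complex.betaIntegral_eq_Gamma_mul_div _ _ (by simpa) (by simpa)] at hbeta
  rw [← Complex.ofReal_inj, ← intervalIntegral.integral_ofReal]
  calc ∫ s in 0..t, (((t - s) ^ (α - 1) * s ^ (β - 1) : ℝ) : ℂ)
      = ∫ s in 0..t, (s : ℂ) ^ ((β : ℂ) - 1) * ((t : ℂ) - s) ^ ((α : ℂ) - 1) := by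
        refine intervalIntegral.integral_congr fun s hs => ?_
        rw [uIcc_of_le ht.le] at hs
        rw [mul_comm, Complex.ofReal_mul, Complex.ofReal_cpow hs.1,
          Complex.ofReal_cpow (sub_nonneg.mpr hs.2)]
        push_cast
        rfl
    _ = _ := by
        rw [hbeta, add_comm α, mul_comm (Gamma α), mul_comm]
        push_cast [Complex.ofReal_cpow ht.le, Complex.Gamma_ofReal]
        simp only [← Complex.Gamma_ofReal, Complex.ofReal_add]

theorem map_add_map_le_of_convexOn {S : Set ℝ} {f : ℝ → ℝ} (hf : ConvexOn ℝ S f) {a b c d : ℝ}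
    (ha : a ∈ S) (hd : d ∈ S) (hab : a ≤ b) (hac : a ≤ c) (h : b + c = a + d) :
    f b + f c ≤ f a + f d := by
  rcases hab.eq_or_lt with rfl | hab
  · rw [add_left_cancel h]
  have hda : 0 < d - a := by linarith
  have hw : (d - b) / (d - a) + (b - a) / (d - a) = 1 := by field_simp; ring
  have hw₁ : 0 ≤ (d - b) / (d - a) := div_nonneg (by linarith) hda.le
  have hw₂ : 0 ≤ (b - a) / (d - a) := div_nonneg (by linarith) hda.le
  have hb := hf.2 ha hd hw₁ hw₂ hw
  have hc := hf.2 ha hd hw₂ hw₁ (by rwa [add_comm])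
  simp only [smul_eq_mul] at hb hc
  have hb_eq : (d - b) / (d - a) * a + (b - a) / (d - a) * d = b := by field_simp; ring
  have hc_eq : (b - a) / (d - a) * a + (d - b) / (d - a) * d = c := by
    rw [show c = a + d - b by linarith]; field_simp; ring
  rw [hb_eq] at hb
  rw [hc_eq] at hc
  calc f b + f c ≤ ((d - b) / (d - a) + (b - a) / (d - a)) * (f a + f d) := by linarith
    _ = f a + f d := by rw [hw, one_mul]

/-- A positive, locally integrable, log-convex convolution kernel on `(0, ∞)`, the class of kernels
whose Volterra resolvent is positive. Values of `k` on `(-∞, 0]` are irrelevant. -/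
structure IsLogConvexKernel (k : ℝ → ℝ) : Prop where
  pos : ∀ t, 0 < t → 0 < k t
  convexOn_log : ConvexOn ℝ (Ioi 0) fun t => Real.log (k t)
  intervalIntegrable : ∀ t, 0 < t → IntervalIntegrable k volume 0 t

/-- `g` is the resolvent of the Volterra kernel `k`: the locally integrable solution on `(0, ∞)` of
`g + k * g = k`, where `*` is the Laplace convolution. -/
structure IsVolterraResolvent (k g : ℝ → ℝ) : Prop where
  continuousOn : ContinuousOn g (Ioi 0)
  intervalIntegrable : ∀ t, 0 < t → IntervalIntegrable g volume 0 t
  eq_sub_integral : ∀ t, 0 < t → g t = k t - ∫ s in 0..t, k (t - s) * g s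

namespace IsLogConvexKernel

variable {k g : ℝ → ℝ} {T : ℝ}

theorem continuousOn (hk : IsLogConvexKernel k) : ContinuousOn k (Ioi 0) :=
  (hk.convexOn_log.continuousOn isOpen_Ioi).rexp.congr fun t ht => (Real.exp_log (hk.pos t ht)).symm

theorem mul_le_mul_shift (hk : IsLogConvexKernel k) {s t : ℝ} (hs : 0 ≤ s) (hst : s < t)
    (htT : t ≤ T) : k t * k (T - s) ≤ k T * k (t - s) := by
  have hts : 0 < t - s := sub_pos.mpr hst
  have hkt := hk.pos t (hs.trans_lt hst)
  have hkT := hk.pos T (by linarith)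
  have hkTs := hk.pos (T - s) (by linarith)
  have hkts := hk.pos (t - s) hts
  have hlog := map_add_map_le_of_convexOn hk.convexOn_log (mem_Ioi.mpr hts)
    (mem_Ioi.mpr (by linarith : 0 < T)) (by linarith : t - s ≤ t) (by linarith : t - s ≤ T - s)
    (by ring)
  rwa [← Real.log_mul hkt.ne' hkTs.ne', ← Real.log_mul hkts.ne' hkT.ne',
    Real.log_le_log_iff (by positivity) (by positivity), mul_comm (k (t - s))] at hlog

theorem intervalIntegrable_comp_sub_mul_resolvent (hk : IsLogConvexKernel k)
    (hg : IsVolterraResolvent k g) (hT : 0 < T) :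
    IntervalIntegrable (fun s => k (T - s) * g s) volume 0 T :=
  intervalIntegrable_comp_sub_mul hT hk.continuousOn (hk.intervalIntegrable T hT)
    hg.continuousOn (hg.intervalIntegrable T hT)

theorem mul_le_mul_integral_of_nonpos (hk : IsLogConvexKernel k) (hg : IsVolterraResolvent k g)
    (hpos : ∀ s ∈ Ioo 0 T, 0 < g s) (hgT : g T ≤ 0) {t : ℝ} (ht : t ∈ Ioo 0 T) :
    k T * g t ≤ k t * ∫ s in t..T, k (T - s) * g s := by
  have hT : 0 < T := ht.1.trans ht.2
  have hint := hk.intervalIntegrable_comp_sub_mul_resolvent hg hT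
  have hmem : t ∈ uIcc 0 T := by rw [uIcc_of_le hT.le]; exact Ioo_subset_Icc_self ht
  have hint₁ := hint.mono_set (uIcc_subset_uIcc_left hmem)
  have hint₂ := hint.mono_set (uIcc_subset_uIcc_right hmem)
  have hcompare : k t * ∫ s in 0..t, k (T - s) * g s ≤ k T * ∫ s in 0..t, k (t - s) * g s := by
    rw [← intervalIntegral.integral_const_mul, ← intervalIntegral.integral_const_mul]
    refine intervalIntegral.integral_mono_on_of_le_Ioo ht.1.le (hint₁.const_mul _)
      ((hk.intervalIntegrable_comp_sub_mul_resolvent hg ht.1).const_mul _) fun s hs => ?_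
    rw [← mul_assoc, ← mul_assoc]
    exact mul_le_mul_of_nonneg_right (hk.mul_le_mul_shift hs.1.le hs.2 ht.2.le)
      (hpos s ⟨hs.1, hs.2.trans ht.2⟩).le
  have hkT : k T ≤ ∫ s in 0..T, k (T - s) * g s := by
    linarith [hg.eq_sub_integral T hT]
  have hkt : ∫ s in 0..t, k (t - s) * g s = k t - g t := by
    linarith [hg.eq_sub_integral t ht.1]
  rw [hkt] at hcompare
  rw [← intervalIntegral.integral_add_adjacent_intervals hint₁ hint₂] at hkT
  have := mul_le_mul_of_nonneg_left hkT (hk.pos t ht.1).le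
  linarith

theorem eventually_mul_integral_lt (hk : IsLogConvexKernel k) (hT : 0 < T) :
    ∀ᶠ t in 𝓝[<] T, k t * ∫ s in t..T, k (T - s) < k T := by
  have hprim : ContinuousOn (fun t => ∫ s in t..T, k (T - s)) (Icc 0 T) := by
    have hint := (hk.intervalIntegrable T hT).comp_sub_left T
    rw [sub_zero, sub_self] at hint
    have := intervalIntegral.continuousOn_primitive_interval' hint left_mem_uIcc
    simp only [intervalIntegral.integral_symm T]
    rw [← uIcc_of_ge hT.le]
    exact this.neg
  have hcont : ContinuousOn (fun t => k t * ∫ s in t..T, k (T - s)) (Ioc 0 T) :=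
    (hk.continuousOn.mono Ioc_subset_Ioi_self).mul (hprim.mono Ioc_subset_Icc_self)
  have hlt := (hcont T ⟨hT, le_rfl⟩).eventually_lt_const
    (by simpa only [intervalIntegral.integral_same, mul_zero] using hk.pos T hT)
  rw [nhdsWithin_Ioc_eq_nhdsLE hT] at hlt
  exact hlt.filter_mono (nhdsWithin_mono T Iio_subset_Iic_self)

theorem resolvent_pos_right (hk : IsLogConvexKernel k) (hg : IsVolterraResolvent k g) (hT : 0 < T)
    (hpos : ∀ s ∈ Ioo 0 T, 0 < g s) : 0 < g T := by
  by_contra! hgT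
  obtain ⟨a, haT, ha⟩ := mem_nhdsLT_iff_exists_Ico_subset.mp
    ((hk.eventually_mul_integral_lt hT).and (Ioo_mem_nhdsLT hT))
  have haT : a < T := haT
  have ha0 : 0 < a := (ha ⟨le_rfl, haT⟩).2.1
  obtain ⟨m, hm, hmax⟩ := isCompact_Icc.exists_isMaxOn (nonempty_Icc.mpr haT.le)
    (hg.continuousOn.mono fun s (hs : s ∈ Icc a T) => ha0.trans_le hs.1)
  have hgm : 0 < g m := (hpos a ⟨ha0, haT⟩).trans_le (hmax ⟨le_rfl, haT.le⟩)
  have hmT : m < T := hm.2.lt_of_ne fun h => (h ▸ hgm).not_ge hgT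
  have hm0 : 0 < m := ha0.trans_le hm.1
  have hmem : m ∈ uIcc 0 T := by rw [uIcc_of_le hT.le]; exact ⟨hm0.le, hmT.le⟩
  have hk_int : IntervalIntegrable (fun s => k (T - s)) volume m T := by
    have := (hk.intervalIntegrable (T - m) (sub_pos.mpr hmT)).comp_sub_left T
    simpa only [sub_zero, sub_sub_cancel] using this.symm
  have htail : ∫ s in m..T, k (T - s) * g s ≤ (∫ s in m..T, k (T - s)) * g m := by
    rw [← intervalIntegral.integral_mul_const]
    refine intervalIntegral.integral_mono_on_of_le_Ioo hmT.le
      ((hk.intervalIntegrable_comp_sub_mul_resolvent hg hT).mono_set (uIcc_subset_uIcc_right hmem))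
      (hk_int.mul_const _) fun s hs => ?_
    exact mul_le_mul_of_nonneg_left (hmax ⟨hm.1.trans hs.1.le, hs.2.le⟩)
      (hk.pos _ (sub_pos.mpr hs.2)).le
  refine lt_irrefl (k T * g m) ?_
  calc k T * g m ≤ k m * ∫ s in m..T, k (T - s) * g s :=
        hk.mul_le_mul_integral_of_nonpos hg hpos hgT ⟨hm0, hmT⟩
    _ ≤ k m * ((∫ s in m..T, k (T - s)) * g m) :=
        mul_le_mul_of_nonneg_left htail (hk.pos m hm0).le
    _ = (k m * ∫ s in m..T, k (T - s)) * g m := by ring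
    _ < k T * g m := mul_lt_mul_of_pos_right (ha ⟨hm.1, hmT⟩).1 hgm

theorem resolvent_pos (hk : IsLogConvexKernel k) (hg : IsVolterraResolvent k g)
    (hg0 : ∀ᶠ t in 𝓝[>] 0, 0 < g t) {t : ℝ} (ht : 0 < t) : 0 < g t := by
  by_contra! hgt
  obtain ⟨ε, hε, hεpos⟩ := (mem_nhdsGT_iff_exists_Ioo_subset' ht).mp hg0
  have hε : 0 < ε := hε
  have hclosed : IsClosed (Icc ε t ∩ g ⁻¹' Iic 0) :=
    (hg.continuousOn.mono fun s hs => hε.trans_le hs.1).preimage_isClosed_of_isClosed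
      isClosed_Icc isClosed_Iic
  have hεt : ε ≤ t := by
    by_contra! htε
    exact hgt.not_gt (hεpos ⟨ht, htε⟩)
  obtain ⟨T, ⟨hT, hgT⟩, hfirst⟩ := (isCompact_Icc.of_isClosed_subset hclosed
    inter_subset_left).exists_isLeast ⟨t, ⟨hεt, le_rfl⟩, hgt⟩
  refine (mem_Iic.mp hgT).not_gt
    (hk.resolvent_pos_right hg (hε.trans_le hT.1) fun s hs => ?_)
  rcases lt_or_ge s ε with hsε | hεs
  · exact hεpos ⟨hs.1, hsε⟩
  · by_contra! hgs
    exact (hfirst ⟨⟨hεs, hs.2.le.trans hT.2⟩, hgs⟩).not_gt hs.2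

end IsLogConvexKernel

theorem isLogConvexKernel_const_mul_rpow {a ρ : ℝ} (ha : 0 < a) (hρ : 0 < ρ) (hρ1 : ρ ≤ 1) :
    IsLogConvexKernel fun t => a * t ^ (ρ - 1) where
  pos t ht := mul_pos ha (Real.rpow_pos_of_pos ht _)
  convexOn_log := by
    have hlog : ConvexOn ℝ (Ioi 0) fun t => (1 - ρ) * -Real.log t + Real.log a :=
      (strictConcaveOn_log_Ioi.concaveOn.neg.smul (sub_nonneg.mpr hρ1)).add_const _
    refine hlog.congr fun t ht => ?_
    rw [Real.log_mul ha.ne' (Real.rpow_pos_of_pos ht _).ne', Real.log_rpow ht]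
    ring
  intervalIntegrable t _ :=
    (intervalIntegral.intervalIntegrable_rpow' (by linarith)).const_mul a

/-- The Mittag-Leffler kernel `t ^ (μ - 1) E_{ρ,μ}(c t ^ ρ)`, whose family is stable under
Riemann–Liouville integration; `μ = ρ` is the Volterra resolvent of `-c t ^ (ρ - 1) / Γ(ρ)` up to
the factor `-c`, and `μ = ρ + 1` is its primitive. -/
noncomputable def mittagLefflerKernel (ρ μ c t : ℝ) : ℝ :=
  t ^ (μ - 1) * mittagLeffler ρ μ (c * t ^ ρ)

section MittagLefflerKernel

variable {ρ μ α t : ℝ}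

theorem continuous_mittagLeffler_mul_rpow (hρ : 0 < ρ) (μ c : ℝ) :
    Continuous fun t : ℝ => mittagLeffler ρ μ (c * t ^ ρ) :=
  (continuous_mittagLeffler hρ μ).comp ((Real.continuous_rpow_const hρ.le).const_mul c)

theorem continuousOn_mittagLefflerKernel (hρ : 0 < ρ) (μ c : ℝ) :
    ContinuousOn (mittagLefflerKernel ρ μ c) (Ioi 0) := fun t ht =>
  ((Real.continuousAt_rpow_const t _ (.inl ht.ne')).mul
    (continuous_mittagLeffler_mul_rpow hρ μ c).continuousAt).continuousWithinAt

theorem intervalIntegrable_mittagLefflerKernel (hρ : 0 < ρ) (hμ : 0 < μ) (c a b : ℝ) :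
    IntervalIntegrable (mittagLefflerKernel ρ μ c) volume a b :=
  (intervalIntegral.intervalIntegrable_rpow' (by linarith)).mul_continuousOn
    (continuous_mittagLeffler_mul_rpow hρ μ c).continuousOn

theorem rpow_sub_one_mul_mul_rpow_pow (ht : 0 < t) (ρ μ c : ℝ) (k : ℕ) :
    t ^ (μ - 1) * (c * t ^ ρ) ^ k = c ^ k * t ^ (ρ * k + μ - 1) := by
  rw [mul_pow, ← Real.rpow_mul_natCast ht.le, add_sub_assoc, Real.rpow_add ht]
  ring

theorem mittagLefflerKernel_eq_add (hρ : 0 < ρ) (μ c : ℝ) (ht : 0 < t) :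
    mittagLefflerKernel ρ μ c t =
      (Gamma μ)⁻¹ * t ^ (μ - 1) + c * mittagLefflerKernel ρ (μ + ρ) c t := by
  have hpow : t ^ (μ + ρ - 1) = t ^ (μ - 1) * t ^ ρ := by
    rw [← Real.rpow_add ht]; ring_nf
  rw [mittagLefflerKernel, mittagLefflerKernel, mittagLeffler_eq_inv_Gamma_add hρ, hpow]
  ring

theorem eventually_mittagLefflerKernel_pos (hρ : 0 < ρ) (hμ : 0 < μ) (c : ℝ) :
    ∀ᶠ t in 𝓝[>] 0, 0 < mittagLefflerKernel ρ μ c t := by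
  have hzero : 0 < mittagLeffler ρ μ (c * (0 : ℝ) ^ ρ) := by
    rw [Real.zero_rpow hρ.ne', mul_zero]
    exact mittagLeffler_pos_of_nonneg hρ hμ le_rfl
  have hnear := (continuous_mittagLeffler_mul_rpow hρ μ c).continuousAt.eventually_const_lt hzero
  filter_upwards [hnear.filter_mono nhdsWithin_le_nhds, self_mem_nhdsWithin] with t hE ht
  exact mul_pos (Real.rpow_pos_of_pos ht _) hE

theorem hasSum_integral_sub_rpow_mul_mittagLefflerKernel (hρ : 0 < ρ) (hμ : 0 < μ) (hα : 0 < α)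
    (c : ℝ) (ht : 0 < t) :
    HasSum (fun k : ℕ => c ^ k / Gamma (ρ * k + μ) *
        ∫ s in 0..t, (t - s) ^ (α - 1) * s ^ (ρ * k + μ - 1))
      (∫ s in 0..t, (t - s) ^ (α - 1) * mittagLefflerKernel ρ μ c s) := by
  have hΓ (k : ℕ) : 0 < Gamma (ρ * k + μ) := Real.Gamma_pos_of_pos (by positivity)
  have hweight := intervalIntegrable_sub_rpow_mul_rpow hα hμ ht
  have hterm (k : ℕ) {s : ℝ} (hs : 0 < s) :
      c ^ k / Gamma (ρ * k + μ) * ((t - s) ^ (α - 1) * s ^ (ρ * k + μ - 1)) =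
        (t - s) ^ (α - 1) * s ^ (μ - 1) * ((c * s ^ ρ) ^ k / Gamma (ρ * k + μ)) := by
    linear_combination -((t - s) ^ (α - 1) / Gamma (ρ * k + μ)) *
      rpow_sub_one_mul_mul_rpow_pow hs ρ μ c k
  simp only [← intervalIntegral.integral_const_mul]
  refine intervalIntegral.hasSum_integral_of_dominated_convergence
    (fun k s => (t - s) ^ (α - 1) * s ^ (μ - 1) * ((|c| * t ^ ρ) ^ k / Gamma (ρ * k + μ)))
    (fun k => ?_) (fun k => ae_of_all _ fun s hs => ?_) (ae_of_all _ fun s _ => ?_) ?_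
    (ae_of_all _ fun s hs => ?_)
  · exact ((intervalIntegrable_sub_rpow_mul_rpow hα (by positivity) ht).const_mul
      _).def'.aestronglyMeasurable
  · rw [uIoc_of_le ht.le] at hs
    have hs0 : 0 ≤ s := hs.1.le
    have hts : 0 ≤ t - s := sub_nonneg.mpr hs.2
    rw [hterm k hs.1, norm_mul, norm_div, norm_pow, norm_mul c, Real.norm_eq_abs c,
      Real.norm_of_nonneg (by positivity : 0 ≤ (t - s) ^ (α - 1) * s ^ (μ - 1)),
      Real.norm_of_nonneg (hΓ k).le, Real.norm_of_nonneg (by positivity : 0 ≤ s ^ ρ)]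
    have := hΓ k
    gcongr
    exact hs.2
  · exact (summable_pow_div_Gamma hρ μ _).mul_left _
  · simp only [tsum_mul_left]
    exact hweight.mul_const _
  · rw [uIoc_of_le ht.le] at hs
    simp only [hterm _ hs.1]
    rw [mittagLefflerKernel, ← mul_assoc]
    exact (summable_pow_div_Gamma hρ μ (c * s ^ ρ)).hasSum.mul_left _

theorem integral_sub_rpow_mul_mittagLefflerKernel (hρ : 0 < ρ) (hμ : 0 < μ) (hα : 0 < α)
    (c : ℝ) (ht : 0 < t) :
    ∫ s in 0..t, (t - s) ^ (α - 1) * mittagLefflerKernel ρ μ c s =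
      Gamma α * mittagLefflerKernel ρ (μ + α) c t := by
  rw [← (hasSum_integral_sub_rpow_mul_mittagLefflerKernel hρ hμ hα c ht).tsum_eq,
    mittagLefflerKernel, mittagLeffler, ← mul_assoc, ← tsum_mul_left]
  refine tsum_congr fun k => ?_
  have hpos : 0 < ρ * k + μ := by positivity
  have hΓ := (Real.Gamma_pos_of_pos hpos).ne'
  rw [integral_sub_rpow_mul_rpow hα hpos ht, mul_assoc, mul_div_assoc',
    rpow_sub_one_mul_mul_rpow_pow ht, add_comm α, ← add_assoc]
  field_simp

theorem integral_mittagLefflerKernel (hρ : 0 < ρ) (hμ : 0 < μ) (c : ℝ) (ht : 0 < t) :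
    ∫ s in 0..t, mittagLefflerKernel ρ μ c s = mittagLefflerKernel ρ (μ + 1) c t := by
  simpa only [sub_self, Real.rpow_zero, one_mul, Real.Gamma_one] using
    integral_sub_rpow_mul_mittagLefflerKernel hρ hμ one_pos c ht

theorem isVolterraResolvent_mittagLefflerKernel (hρ : 0 < ρ) :
    IsVolterraResolvent (fun t => (Gamma ρ)⁻¹ * t ^ (ρ - 1)) (mittagLefflerKernel ρ ρ (-1)) where
  continuousOn := continuousOn_mittagLefflerKernel hρ ρ (-1)
  intervalIntegrable := fun t _ => intervalIntegrable_mittagLefflerKernel hρ hρ (-1) 0 t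
  eq_sub_integral t ht := by
    simp only [mul_assoc, intervalIntegral.integral_const_mul]
    rw [integral_sub_rpow_mul_mittagLefflerKernel hρ hρ hρ (-1) ht,
      inv_mul_cancel_left₀ (Real.Gamma_pos_of_pos hρ).ne', mittagLefflerKernel_eq_add hρ ρ (-1) ht]
    ring

theorem mittagLeffler_self_pos (hρ : 0 < ρ) (hρ1 : ρ ≤ 1) (z : ℝ) : 0 < mittagLeffler ρ ρ z := by
  rcases le_or_gt 0 z with hz | hz
  · exact mittagLeffler_pos_of_nonneg hρ hρ hz
  · have hz' : 0 < -z := neg_pos.mpr hz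
    have hker := (isLogConvexKernel_const_mul_rpow (inv_pos.mpr (Real.Gamma_pos_of_pos hρ)) hρ
      hρ1).resolvent_pos (isVolterraResolvent_mittagLefflerKernel hρ)
      (eventually_mittagLefflerKernel_pos hρ hρ (-1)) (Real.rpow_pos_of_pos hz' ρ⁻¹)
    rw [mittagLefflerKernel, Real.rpow_inv_rpow hz'.le hρ.ne', neg_one_mul, neg_neg] at hker
    exact pos_of_mul_pos_right hker (by positivity)

theorem strictMonoOn_mittagLefflerKernel_add_one (hρ : 0 < ρ) (hρ1 : ρ ≤ 1) (c : ℝ) :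
    StrictMonoOn (mittagLefflerKernel ρ (ρ + 1) c) (Ici 0) := by
  have hprim : ∀ t ∈ Ici (0 : ℝ),
      ∫ s in 0..t, mittagLefflerKernel ρ ρ c s = mittagLefflerKernel ρ (ρ + 1) c t := by
    intro t ht
    rcases (mem_Ici.mp ht).eq_or_lt with rfl | ht
    · simp [mittagLefflerKernel, Real.zero_rpow hρ.ne']
    · exact integral_mittagLefflerKernel hρ hρ c ht
  have hint := intervalIntegrable_mittagLefflerKernel hρ hρ c
  intro s hs t ht hst
  rw [← hprim s hs, ← hprim t ht, ← sub_pos,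
    intervalIntegral.integral_interval_sub_left (hint 0 t) (hint 0 s)]
  exact intervalIntegral.intervalIntegral_pos_of_pos_on (hint s t) (fun x hx =>
    mul_pos (Real.rpow_pos_of_pos ((mem_Ici.mp hs).trans_lt hx.1) _)
      (mittagLeffler_self_pos hρ hρ1 _)) hst

end MittagLefflerKernel

theorem stmt17_general (ρ lam : ℝ) (hρ : 0 < ρ) (hρ1 : ρ ≤ 1) :
    ContinuousOn (fun t : ℝ => t ^ ρ * mittagLeffler ρ (ρ + 1) (-lam * t ^ ρ)) (Set.Ici 0) ∧
    (0 : ℝ) ^ ρ * mittagLeffler ρ (ρ + 1) (-lam * (0 : ℝ) ^ ρ) = 0 ∧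
    StrictMonoOn (fun t : ℝ => t ^ ρ * mittagLeffler ρ (ρ + 1) (-lam * t ^ ρ)) (Set.Ici 0) ∧
    ∀ t : ℝ, 0 < t → 0 < t ^ ρ * mittagLeffler ρ (ρ + 1) (-lam * t ^ ρ) := by
  have hzero : (0 : ℝ) ^ ρ * mittagLeffler ρ (ρ + 1) (-lam * (0 : ℝ) ^ ρ) = 0 := by
    rw [Real.zero_rpow hρ.ne', zero_mul]
  have hmono : StrictMonoOn
      (fun t : ℝ => t ^ ρ * mittagLeffler ρ (ρ + 1) (-lam * t ^ ρ)) (Ici 0) := by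
    intro s hs t ht hst
    simpa only [mittagLefflerKernel, add_sub_cancel_right] using
      strictMonoOn_mittagLefflerKernel_add_one hρ hρ1 (-lam) hs ht hst
  refine ⟨?_, hzero, hmono, fun t ht => ?_⟩
  · exact ((Real.continuous_rpow_const hρ.le).mul
      (continuous_mittagLeffler_mul_rpow hρ (ρ + 1) (-lam))).continuousOn
  · simpa only [hzero] using hmono self_mem_Ici (mem_Ici.mpr ht.le) ht

/-- for `ρ ∈ (0,1]` and `λ ≥ 0`, the function
`F(t) = t^ρ E_{ρ,ρ+1}(−λ t^ρ)` is continuous on `[0,∞)`, vanishes at `0`, is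
nondecreasing on `[0,∞)`, and is positive for `t > 0`. -/
theorem stmt17 (ρ lam : ℝ) (hρ : 0 < ρ) (hρ1 : ρ ≤ 1) (hlam : 0 ≤ lam) :
    ContinuousOn (fun t : ℝ => t ^ ρ * mittagLeffler ρ (ρ + 1) (-lam * t ^ ρ)) (Set.Ici 0) ∧
    (0 : ℝ) ^ ρ * mittagLeffler ρ (ρ + 1) (-lam * (0 : ℝ) ^ ρ) = 0 ∧
    MonotoneOn (fun t : ℝ => t ^ ρ * mittagLeffler ρ (ρ + 1) (-lam * t ^ ρ)) (Set.Ici 0) ∧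
    ∀ t : ℝ, 0 < t → 0 < t ^ ρ * mittagLeffler ρ (ρ + 1) (-lam * t ^ ρ) :=
  let ⟨hcont, hzero, hmono, hpos⟩ := stmt17_general ρ lam hρ hρ1
  ⟨hcont, hzero, hmono.monotoneOn, hpos⟩
end
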